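/- For every β ∈ ℝ with β ≠ −1, f_β((2+β)/(3(1+β))) = −(β²+β−1)(1+β+β²)² / (9(1+β)³). Consequently, for β ∈ (−1,1), the number (2+β)/(3(1+β)) is a root of f_β if and only if β = σ. -/

import Mathlib

/-- The cubic governing the clockwise (Shapley) periodic orbit. -/
noncomputable def fShapley (β Z : ℝ) : ℝ :=
  (3*β^2 + 3*β + 3)*Z^3 + (2*β^3 - 2*β^2 - 5*β - 4)*Z^2 + (-β^3 + 4*β + 3)*Z - (1 + β)

theorem one_add_self_add_sq_pos {R : Type*} [CommRing R] [LinearOrder R] [IsStrictOrderedRing R]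
    (x : R) : 0 < 1 + x + x^2 := by
  nlinarith [sq_nonneg x, sq_nonneg (1 + x)]

theorem neg_goldenConj_eq : -Real.goldenConj = (Real.sqrt 5 - 1)/2 := by
  rw [Real.goldenConj]
  ring

theorem sq_add_self_sub_one_eq_mul (x : ℝ) :
    x^2 + x - 1 = (x + Real.goldenConj)*(x + Real.goldenRatio) := by
  linear_combination -x * Real.goldenRatio_add_goldenConj - Real.goldenRatio_mul_goldenConj

theorem sq_add_self_sub_one_eq_zero_iff {x : ℝ} :
    x^2 + x - 1 = 0 ↔ x = -Real.goldenConj ∨ x = -Real.goldenRatio := by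
  rw [sq_add_self_sub_one_eq_mul, mul_eq_zero, add_eq_zero_iff_eq_neg, add_eq_zero_iff_eq_neg]

theorem fShapley_apply_div {β : ℝ} (hβ : β ≠ -1) :
    fShapley β ((2 + β)/(3*(1 + β))) =
      -((β^2 + β - 1)*(1 + β + β^2)^2) / (9*(1 + β)^3) := by
  have h : 1 + β ≠ 0 := fun h => hβ (eq_neg_of_add_eq_zero_right h)
  unfold fShapley
  field_simp
  ring

theorem fShapley_apply_div_eq_zero_iff {β : ℝ} (hβ : β ≠ -1) :
    fShapley β ((2 + β)/(3*(1 + β))) = 0 ↔ β^2 + β - 1 = 0 := by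
  have hden : 9*(1 + β)^3 ≠ 0 :=
    mul_ne_zero (by norm_num) (pow_ne_zero 3 fun h => hβ (eq_neg_of_add_eq_zero_right h))
  have hsq : (1 + β + β^2)^2 ≠ 0 := pow_ne_zero 2 (one_add_self_add_sq_pos β).ne'
  rw [fShapley_apply_div hβ, div_eq_zero_iff, or_iff_left hden, neg_eq_zero, mul_eq_zero,
    or_iff_left hsq]

theorem stmt8_general :
    (∀ β : ℝ, β ≠ -1 →
      fShapley β ((2 + β)/(3*(1 + β))) =
        -((β^2 + β - 1)*(1 + β + β^2)^2) / (9*(1 + β)^3)) ∧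
    (∀ β : ℝ, β ≠ -1 →
      (fShapley β ((2 + β)/(3*(1 + β))) = 0 ↔
        β = -Real.goldenConj ∨ β = -Real.goldenRatio)) :=
  ⟨fun _ hβ => fShapley_apply_div hβ,
    fun _ hβ => (fShapley_apply_div_eq_zero_iff hβ).trans sq_add_self_sub_one_eq_zero_iff⟩

/-- for β ≠ −1, f_β((2+β)/(3(1+β))) = −(β²+β−1)(1+β+β²)²/(9(1+β)³);
hence for β ∈ (−1,1) the number (2+β)/(3(1+β)) is a root of f_β iff β = σ. -/
theorem stmt8 :
    (∀ β : ℝ, β ≠ -1 →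
      fShapley β ((2 + β)/(3*(1 + β))) =
        -((β^2 + β - 1)*(1 + β + β^2)^2) / (9*(1 + β)^3)) ∧
    (∀ β ∈ Set.Ioo (-1 : ℝ) 1,
      (fShapley β ((2 + β)/(3*(1 + β))) = 0 ↔ β = (Real.sqrt 5 - 1)/2)) := by
  refine ⟨stmt8_general.1, fun β hβ => ?_⟩
  have hφ : β ≠ -Real.goldenRatio := ((neg_lt_neg Real.one_lt_goldenRatio).trans hβ.1).ne'
  rw [stmt8_general.2 β hβ.1.ne', or_iff_left hφ, neg_goldenConj_eq]
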